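/- Let V_1, …, V_n be H-modules, each finite-dimensional over F and indecomposable, and suppose every indecomposable H-module that is finite-dimensional over F is isomorphic to some V_i. Then for all m, s : Fin n → ℕ and every H-linear map f : V^(s) → V^(m), there exist t : Fin n → ℕ and an injective H-linear map k : V^(t) → V^(s) whose range equals the kernel of f. -/

import Mathlib

/-- An `H`-module `M` is indecomposable if it is nonzero and whenever `p` and `q` are
complementary submodules, one of them is trivial. -/
def IsIndecomposableModule (H : Type*) [Ring H] (M : Type*) [AddCommGroup M]
    [Module H M] : Prop :=
  (∃ x : M, x ≠ 0) ∧
    ∀ p q : Submodule H M, p ⊓ q = ⊥ → p ⊔ q = ⊤ → p = ⊥ ∨ q = ⊥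

/-! In a modular lattice with the descending chain condition, splitting an element again and again
must stop, so every element is an independent finite join of elements that do not split further.
In the submodule lattice of an Artinian module such elements are indecomposable submodules, so the
kernel of `f` is a finite direct sum of indecomposables, and it remains to collect isomorphic
summands. -/

section Lattice

variable {α : Type*} [Lattice α] [OrderBot α]

theorem supIndep_union_of_disjoint_sup [IsModularLattice α] {ι : Type*} [DecidableEq ι]
    {s t : Finset ι} {f : ι → α} (hs : s.SupIndep f) (ht : t.SupIndep f)
    (hst : Disjoint (s.sup f) (t.sup f)) : (s ∪ t).SupIndep f := by
  intro u hu i hi hiu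
  wlog his : i ∈ s generalizing s t
  · rw [Finset.union_comm] at hu hi
    exact this ht hs hst.symm hu hi ((Finset.mem_union.1 hi).resolve_right his)
  have hu_eq : u = u ∩ s ∪ u ∩ t := by
    rw [← Finset.inter_union_distrib_left, Finset.inter_eq_left.2 hu]
  have hsup_le {v : Finset ι} : (u ∩ v).sup f ≤ v.sup f := Finset.sup_mono Finset.inter_subset_right
  have hi_disj : Disjoint (f i) ((u ∩ s).sup f) :=
    hs Finset.inter_subset_right his (hiu <| Finset.mem_of_mem_inter_left ·)
  rw [hu_eq, Finset.sup_union]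
  exact hi_disj.disjoint_sup_right_of_disjoint_sup_left
    (hst.mono (sup_le (Finset.le_sup his) hsup_le) hsup_le)

/-- The lattice-theoretic counterpart of an indecomposable module: a nonzero element that is not the
join of two disjoint nonzero elements. -/
def SupIndecomposable (a : α) : Prop :=
  a ≠ ⊥ ∧ ∀ ⦃b c : α⦄, Disjoint b c → b ⊔ c = a → b = ⊥ ∨ c = ⊥

theorem exists_supIndecomposable_decomposition [IsModularLattice α] [WellFoundedLT α] (a : α) :
    ∃ s : Finset α, s.SupIndep id ∧ s.sup id = a ∧ ∀ ⦃b⦄, b ∈ s → SupIndecomposable b := by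
  classical
  induction a using WellFoundedLT.induction with
  | _ a ih =>
  by_cases ha : SupIndecomposable a
  · exact ⟨{a}, Finset.supIndep_singleton a id, Finset.sup_singleton, by simpa using ha⟩
  obtain rfl | ha_ne := eq_or_ne a ⊥
  · exact ⟨∅, Finset.supIndep_empty id, Finset.sup_empty, by simp⟩
  obtain ⟨b, c, hbc, rfl, hb, hc⟩ : ∃ b c, Disjoint b c ∧ b ⊔ c = a ∧ b ≠ ⊥ ∧ c ≠ ⊥ := by
    simpa [SupIndecomposable, ha_ne] using ha
  have hb_lt : b < b ⊔ c := left_lt_sup.2 fun hcb => hc (hbc.eq_bot_of_ge hcb)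
  have hc_lt : c < b ⊔ c := right_lt_sup.2 fun hbc_le => hb (hbc.eq_bot_of_le hbc_le)
  obtain ⟨s, hs, rfl, hs_indec⟩ := ih b hb_lt
  obtain ⟨t, ht, rfl, ht_indec⟩ := ih c hc_lt
  exact ⟨s ∪ t, supIndep_union_of_disjoint_sup hs ht hbc, Finset.sup_union,
    Finset.forall_mem_union.2 ⟨hs_indec, ht_indec⟩⟩

end Lattice

theorem exists_sigma_fin_equiv {ι κ : Type*} [Finite κ] (c : κ → ι) :
    ∃ (t : ι → ℕ) (σ : (Σ i, Fin (t i)) ≃ κ), ∀ p, c (σ p) = p.1 :=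
  ⟨fun i => Nat.card {j // c j = i},
    (Equiv.sigmaCongrRight fun i => (Finite.equivFin {j // c j = i}).symm).trans
      (Equiv.sigmaFiberEquiv c),
    fun p => ((Finite.equivFin {j // c j = p.1}).symm p.2).2⟩

section Module

variable {H X : Type*} [Ring H] [AddCommGroup X] [Module H X]

theorem SupIndecomposable.isIndecomposableModule {N : Submodule H X} (hN : SupIndecomposable N) :
    IsIndecomposableModule H N := by
  have := Submodule.nontrivial_iff_ne_bot.2 hN.1
  refine ⟨exists_ne 0, fun p q hinf hsup => ?_⟩
  have hdisj : Disjoint (p.map N.subtype) (q.map N.subtype) :=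
    Submodule.disjoint_map N.injective_subtype (disjoint_iff.2 hinf)
  have hjoin : p.map N.subtype ⊔ q.map N.subtype = N := by
    rw [← Submodule.map_sup, hsup, Submodule.map_subtype_top]
  have hmap_eq_bot {r : Submodule H N} (hr : r.map N.subtype = ⊥) : r = ⊥ :=
    Submodule.map_injective_of_injective N.injective_subtype (hr.trans (Submodule.map_bot _).symm)
  exact (hN.2 hdisj hjoin).imp hmap_eq_bot hmap_eq_bot

variable {ι : Type*} {V : ι → Type*} [∀ i, AddCommGroup (V i)] [∀ i, Module H (V i)]

theorem exists_injective_range_eq_iSup {κ : Type*} [Finite κ] {N : κ → Submodule H X}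
    (hN : iSupIndep N) (hV : ∀ j, ∃ i, Nonempty (N j ≃ₗ[H] V i)) :
    ∃ (t : ι → ℕ) (k : (DirectSum (Σ i, Fin (t i)) fun p => V p.1) →ₗ[H] X),
      Function.Injective k ∧ LinearMap.range k = ⨆ j, N j := by
  classical
  choose c e using hV
  obtain ⟨t, σ, hσ⟩ := exists_sigma_fin_equiv c
  have e' (p : Σ i, Fin (t i)) : Nonempty (N (σ p) ≃ₗ[H] V p.1) := hσ p ▸ e (σ p)
  let g : (DirectSum (Σ i, Fin (t i)) fun p => V p.1) ≃ₗ[H] DirectSum _ fun p => N (σ p) :=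
    DirectSum.congrLinearEquiv fun p => (e' p).some.symm
  refine ⟨t, DirectSum.coeLinearMap (N ∘ σ) ∘ₗ g.toLinearMap,
    (hN.comp σ.injective).dfinsupp_lsum_injective.comp g.injective, ?_⟩
  rw [LinearMap.range_comp_of_range_eq_top _ g.range, DirectSum.range_coeLinearMap]
  exact σ.iSup_comp

theorem stmt9_general [IsArtinian H X] {Y : Type*} [AddCommGroup Y] [Module H Y]
    (hall : ∀ N : Submodule H X, IsIndecomposableModule H N → ∃ i, Nonempty (N ≃ₗ[H] V i))
    (f : X →ₗ[H] Y) :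
    ∃ (t : ι → ℕ) (k : (DirectSum (Σ i, Fin (t i)) fun p => V p.1) →ₗ[H] X),
      Function.Injective k ∧ LinearMap.range k = LinearMap.ker f := by
  obtain ⟨s, hs_indep, hs_sup, hs_indec⟩ := exists_supIndecomposable_decomposition (LinearMap.ker f)
  obtain ⟨t, k, hk, hrange⟩ := exists_injective_range_eq_iSup hs_indep.independent
    fun N => hall N (hs_indec N.2).isIndecomposableModule
  have hsup : ⨆ N : s, (N : Submodule H X) = LinearMap.ker f := by
    simp only [← hs_sup, Finset.sup_eq_iSup, iSup_subtype, id_eq]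
  exact ⟨t, k, hk, hrange.trans hsup⟩

end Module

theorem stmt9.{u} (F : Type*) [Field F] (H : Type*) [Ring H] [Algebra F H]
    (n : ℕ) (V : Fin n → Type u)
    [∀ i, AddCommGroup (V i)] [∀ i, Module H (V i)]
    [∀ i, Module F (V i)] [∀ i, IsScalarTower F H (V i)]
    [∀ i, FiniteDimensional F (V i)]
    (hind : ∀ i, IsIndecomposableModule H (V i))
    (hall : ∀ (W : Type u) [AddCommGroup W] [Module H W] [Module F W]
      [IsScalarTower F H W] [FiniteDimensional F W],
      IsIndecomposableModule H W → ∃ i : Fin n, Nonempty (W ≃ₗ[H] V i))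
    (m s : Fin n → ℕ)
    (f : (DirectSum (Σ i : Fin n, Fin (s i)) fun p => V p.1) →ₗ[H]
      (DirectSum (Σ i : Fin n, Fin (m i)) fun p => V p.1)) :
    ∃ (t : Fin n → ℕ)
      (k : (DirectSum (Σ i : Fin n, Fin (t i)) fun p => V p.1) →ₗ[H]
        (DirectSum (Σ i : Fin n, Fin (s i)) fun p => V p.1)),
      Function.Injective k ∧ LinearMap.range k = LinearMap.ker f := by
  have : IsArtinian H (DirectSum (Σ i : Fin n, Fin (s i)) fun p => V p.1) :=
    isArtinian_of_tower F inferInstance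
  exact stmt9_general (H := H) (fun N =>
    have := FiniteDimensional.of_injective (N.subtype.restrictScalars F) N.injective_subtype
    hall N) f
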